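/- Let A be a finite-dimensional F-algebra and I a proper two-sided ideal of A. Then there exists an S-nice subalgebra R of A such that I is an ideal of R. -/

import Mathlib

/-- Let `A` be a finite-dimensional `F`-algebra and `I` a proper two-sided
ideal of `A`. Then there is an `S`-nice subalgebra `R` of `A` (`R ∩ F = S`, `RF = A`)
containing `I` as a two-sided ideal. -/
theorem stmt13 {S F A : Type*} [CommRing S] [IsDomain S] [Field F] [Ring A] [Nontrivial A]
    [Algebra S F] [IsFractionRing S F] [Algebra F A] [Algebra S A] [IsScalarTower S F A]
    [FiniteDimensional F A]
    (hS : ¬ IsField S)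
    (I : Submodule F A) (hIideal : ∀ a ∈ I, ∀ x : A, x * a ∈ I ∧ a * x ∈ I)
    (hIne : I ≠ ⊤) :
    ∃ R : Subalgebra S A,
      (∀ x : F, algebraMap F A x ∈ R ↔ ∃ s : S, algebraMap S F s = x) ∧
      Submodule.span F (R : Set A) = ⊤ ∧
      (I : Set A) ⊆ (R : Set A) ∧
      (∀ r ∈ R, ∀ a ∈ I, r * a ∈ I ∧ a * r ∈ I) := by
  classical
  let b := Module.finBasis F (A ⧸ I)
  have : Nontrivial (A ⧸ I) := Submodule.Quotient.nontrivial_iff.2 hIne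
  have hpos : 0 < Module.finrank F (A ⧸ I) := Module.finrank_pos
  choose e he using fun i => Submodule.mkQ_surjective I (b i)
  let c : Fin (Module.finrank F (A ⧸ I)) → A →ₗ[F] F := fun i => b.coord i ∘ₗ I.mkQ
  have hcI : ∀ i, ∀ a ∈ I, c i a = 0 := by
    intro i a ha
    simp [c, (Submodule.Quotient.mk_eq_zero I).2 ha]
  have hce : ∀ i j, c j (e i) = if i = j then 1 else 0 := by
    intro i j
    simp only [c, LinearMap.comp_apply, he, Module.Basis.coord_apply, b.repr_self_apply]
  have hexp : ∀ y : A, y - ∑ i, c i y • e i ∈ I := by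
    intro y
    rw [← Submodule.Quotient.mk_eq_zero I, ← Submodule.mkQ_apply, map_sub, map_sum]
    simp only [map_smul, he]
    rw [sub_eq_zero]
    exact (b.sum_repr (I.mkQ y)).symm
  have hmul : ∀ (x y : A) (j), c j (x * y) = ∑ i, c i y * c j (x * e i) := by
    intro x y j
    have h := hcI j _ (hIideal _ (hexp y) x).1
    rw [mul_sub, map_sub, sub_eq_zero, Finset.mul_sum, map_sum] at h
    simpa [mul_smul_comm] using h
  let L : Set A := {y | ∀ j, c j y ∈ (algebraMap S F).range}
  have halg : ∀ s : S, algebraMap S A s = algebraMap F A (algebraMap S F s) :=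
    IsScalarTower.algebraMap_apply S F A
  let R : Subalgebra S A :=
    { carrier := {x | ∀ y ∈ L, x * y ∈ L}
      mul_mem' := fun {p q} hp hq y hy => by
        rw [mul_assoc]
        exact hp _ (hq y hy)
      add_mem' := fun {p q} hp hq y hy j => by
        rw [add_mul, map_add]
        exact add_mem (hp y hy j) (hq y hy j)
      algebraMap_mem' := fun s y hy j => by
        rw [halg, ← Algebra.smul_def, map_smul, smul_eq_mul]
        exact mul_mem ⟨s, rfl⟩ (hy j) }
  have hIR : (I : Set A) ⊆ R := fun a ha y _ j => by
    rw [hcI j _ (hIideal a ha y).2]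
    exact zero_mem _
  refine ⟨R, fun x => ⟨fun hx => ?_, ?_⟩, ?_, hIR, fun r _ a ha => hIideal a ha r⟩
  · let i : Fin (Module.finrank F (A ⧸ I)) := ⟨0, hpos⟩
    have hL : e i ∈ L := fun j => by
      rw [hce]
      split_ifs
      exacts [one_mem _, zero_mem _]
    have h := hx _ hL i
    rw [← Algebra.smul_def, map_smul, hce, if_pos rfl, smul_eq_mul, mul_one] at h
    exact h
  · rintro ⟨s, rfl⟩
    rw [← halg]
    exact R.algebraMap_mem s
  · refine eq_top_iff.2 fun x _ => ?_
    obtain ⟨s, hs⟩ := IsLocalization.exist_integer_multiples_of_finite (nonZeroDivisors S)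
      fun p : Fin (Module.finrank F (A ⧸ I)) × Fin (Module.finrank F (A ⧸ I)) =>
        c p.2 (x * e p.1)
    have hs0 : algebraMap S F s ≠ 0 := IsFractionRing.to_map_ne_zero_of_mem_nonZeroDivisors s.2
    have hx : algebraMap S F s • x ∈ R := fun y hy j => by
      rw [smul_mul_assoc, map_smul, hmul, smul_eq_mul, Finset.mul_sum]
      refine sum_mem fun i _ => ?_
      rw [mul_left_comm]
      refine mul_mem (hy i) ?_
      obtain ⟨t, ht⟩ := hs (i, j)
      exact ⟨t, by rw [ht, Algebra.smul_def]⟩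
    have h := Submodule.smul_mem _ (algebraMap S F s)⁻¹ (Submodule.subset_span (R := F) hx)
    rwa [inv_smul_smul₀ hs0] at h
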